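/- For all n ≥ 0, the number of walks on the slit plane of length 2n+1 ending at (0,1) equals 4ⁿ·Cₙ, where Cₙ = binom(2n,n)/(n+1) is the n-th Catalan number; and walks on the slit plane ending at (0,1) of even length do not exist, i.e. a_{0,1}(2n) = 0. -/

import Mathlib

open Filter

/-- The forbidden half-line `H = {(k,0) : k ≤ 0}`. -/
def slitH : Set (ℤ × ℤ) := {p : ℤ × ℤ | p.2 = 0 ∧ p.1 ≤ 0}

/-- The four steps of the ordinary square lattice. -/
def sqSteps : Set (ℤ × ℤ) := {(1,0), (-1,0), (0,1), (0,-1)}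

/-- The four diagonal steps. -/
def diagSteps : Set (ℤ × ℤ) := {(1,1), (1,-1), (-1,1), (-1,-1)}

/-- `w : Fin (n+1) → ℤ × ℤ` is a walk on the slit plane with steps in `A`. -/
def IsSlitWalk (A : Set (ℤ × ℤ)) (n : ℕ) (w : Fin (n+1) → ℤ × ℤ) : Prop :=
  w 0 = (0,0) ∧ (∀ m : Fin n, w m.succ - w m.castSucc ∈ A) ∧
    ∀ m : Fin (n+1), 1 ≤ (m : ℕ) → w m ∉ slitH

/-- `a_{i,j}(n)`: the number of walks on the slit plane of length `n` ending at `(i,j)`. -/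
noncomputable def slitCount (A : Set (ℤ × ℤ)) (i j : ℤ) (n : ℕ) : ℕ :=
  Nat.card {w : Fin (n+1) → ℤ × ℤ // IsSlitWalk A n w ∧ w (Fin.last n) = (i, j)}

/-!
Let `S_j(x, t)` be the generating function of the walks ending at height `j`. The equations
`(1 - t (x + x⁻¹)) S_j = t (S_{j-1} + S_{j+1})`, `j ≥ 1`, make
`t (S_j² + S_{j+1}²) - (1 - t (x + x⁻¹)) S_j S_{j+1}` independent of `j`, hence zero since `S_j` is
divisible by `t ^ j`. Combined with the equation at height `0` this gives
`((1 - t (x + x⁻¹))² - 4 t²) S_0(x)² = (1 - H(x⁻¹))²`, where `H` counts the walks stopped at their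
first return to the half-line. With `C` the Catalan series, the left-hand factor is
`P(x) P(x⁻¹) / (C(t) C(-t))²`; after division by `P(x⁻¹)` the left side is a series in `x` and the
right side one in `x⁻¹`, so both are constant in `x`: `S_0(x)² P(x) = 1` and
`(C(t) C(-t) (1 - H(x)))² = P(x)`. The coefficients of `x¹` in the former and of `x⁰` in the latter
determine the series of `a_{1,0}` and `a_{0,1}`.
-/

section Walks

variable {A : Set (ℤ × ℤ)} {n : ℕ} {p : ℤ × ℤ}

/-- The walks on the slit plane of length `n` with steps in `A` that end at `p`; `slitCount` is the
cardinality of this type. -/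
abbrev SlitWalksTo (A : Set (ℤ × ℤ)) (n : ℕ) (p : ℤ × ℤ) : Type :=
  {w : Fin (n + 1) → ℤ × ℤ // IsSlitWalk A n w ∧ w (Fin.last n) = p}

lemma isSlitWalk_snoc_iff {w : Fin (n + 1) → ℤ × ℤ} :
    IsSlitWalk A (n + 1) (Fin.snoc (α := fun _ => ℤ × ℤ) w p) ↔
      IsSlitWalk A n w ∧ p - w (Fin.last n) ∈ A ∧ p ∉ slitH := by
  simp only [IsSlitWalk, Fin.forall_fin_succ', Fin.snoc_apply_zero, Fin.succ_castSucc,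
    Fin.snoc_castSucc, Fin.succ_last, Fin.snoc_last, Fin.val_castSucc, Fin.val_last,
    Nat.le_add_left, forall_const]
  tauto

lemma snoc_init_slitWalksTo (w : SlitWalksTo A (n + 1) p) :
    Fin.snoc (α := fun _ => ℤ × ℤ) (Fin.init w.1) p = w.1 := by
  obtain ⟨w, -, rfl⟩ := w
  exact Fin.snoc_init_self w

/-- Removing the last step of a walk that ends off the half-line. -/
def slitWalksToSuccEquiv (A : Set (ℤ × ℤ)) (n : ℕ) (hp : p ∉ slitH) :
    SlitWalksTo A (n + 1) p ≃ Σ s : A, SlitWalksTo A n (p - s) where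
  toFun w :=
    have hw : IsSlitWalk A n (Fin.init w.1) ∧ p - Fin.init w.1 (Fin.last n) ∈ A ∧ p ∉ slitH :=
      isSlitWalk_snoc_iff.1 (by rw [snoc_init_slitWalksTo]; exact w.2.1)
    ⟨⟨p - Fin.init w.1 (Fin.last n), hw.2.1⟩, Fin.init w.1, hw.1, (sub_sub_cancel _ _).symm⟩
  invFun x := ⟨Fin.snoc x.2.1 p,
    isSlitWalk_snoc_iff.2 ⟨x.2.2.1, by rw [x.2.2.2, sub_sub_cancel]; exact x.1.2, hp⟩,
    Fin.snoc_last _ _⟩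
  left_inv w := Subtype.ext (snoc_init_slitWalksTo w)
  right_inv x := Sigma.subtype_ext
    (Subtype.ext (by simp only [Fin.init_snoc, x.2.2.2, sub_sub_cancel]))
    (by simp only [Fin.init_snoc])

lemma isEmpty_slitWalksTo_succ (hp : p ∈ slitH) : IsEmpty (SlitWalksTo A (n + 1) p) :=
  ⟨fun w => w.2.1.2.2 (Fin.last _) (by simp) (by rwa [w.2.2])⟩

instance subsingleton_slitWalksTo_zero : Subsingleton (SlitWalksTo A 0 p) :=
  ⟨fun v w => Subtype.ext <| funext fun m => by
    rw [Subsingleton.elim (α := Fin 1) m 0, v.2.1.1, w.2.1.1]⟩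

instance finite_slitWalksTo [Finite A] : Finite (SlitWalksTo A n p) := by
  induction n generalizing p with
  | zero => infer_instance
  | succ n ih =>
    by_cases hp : p ∈ slitH
    · have := isEmpty_slitWalksTo_succ (A := A) (n := n) hp
      infer_instance
    · exact Finite.of_equiv _ (slitWalksToSuccEquiv A n hp).symm

lemma slitCount_zero (A : Set (ℤ × ℤ)) (i j : ℤ) :
    slitCount A i j 0 = if i = 0 ∧ j = 0 then 1 else 0 := by
  change Nat.card (SlitWalksTo A 0 (i, j)) = _
  split_ifs with h
  · have : Inhabited (SlitWalksTo A 0 (i, j)) :=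
      ⟨fun _ => (0, 0), ⟨rfl, fun m => m.elim0, fun m hm => by omega⟩, by rw [h.1, h.2]⟩
    exact Nat.card_unique
  · have : IsEmpty (SlitWalksTo A 0 (i, j)) :=
      ⟨fun w => h <| Prod.ext_iff.1 (w.2.2.symm.trans w.2.1.1)⟩
    exact Nat.card_of_isEmpty

lemma slitCount_succ_of_mem {i j : ℤ} (h : (i, j) ∈ slitH) : slitCount A i j (n + 1) = 0 :=
  have := isEmpty_slitWalksTo_succ (A := A) (n := n) h
  Nat.card_of_isEmpty

lemma slitCount_succ_of_notMem (A : Finset (ℤ × ℤ)) (n : ℕ) {i j : ℤ} (h : (i, j) ∉ slitH) :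
    slitCount A i j (n + 1) = ∑ s ∈ A, slitCount A (i - s.1) (j - s.2) n := by
  rw [← Finset.sum_coe_sort A]
  exact (Nat.card_congr (slitWalksToSuccEquiv A n h)).trans Nat.card_sigma

end Walks

section SquareLattice

lemma slitCount_sqSteps_succ {i j : ℤ} (n : ℕ) (h : (i, j) ∉ slitH) :
    slitCount sqSteps i j (n + 1) = slitCount sqSteps (i - 1) j n + slitCount sqSteps (i + 1) j n +
      slitCount sqSteps i (j - 1) n + slitCount sqSteps i (j + 1) n := by
  have hA : sqSteps = ({(1, 0), (-1, 0), (0, 1), (0, -1)} : Finset (ℤ × ℤ)) := by simp [sqSteps]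
  rw [hA, slitCount_succ_of_notMem _ _ h]
  simp [add_assoc]

lemma slitCount_sqSteps_eq_zero_of_lt {i j : ℤ} {n : ℕ} (h : n < i.natAbs + j.natAbs) :
    slitCount sqSteps i j n = 0 := by
  induction n generalizing i j with
  | zero => rw [slitCount_zero, if_neg (by omega)]
  | succ n ih =>
    by_cases hp : (i, j) ∈ slitH
    · exact slitCount_succ_of_mem hp
    · rw [slitCount_sqSteps_succ n hp, ih, ih, ih, ih] <;> omega

lemma slitCount_sqSteps_eq_zero_of_odd {i j : ℤ} {n : ℕ} (h : Odd (i + j + n)) :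
    slitCount sqSteps i j n = 0 := by
  induction n generalizing i j with
  | zero => rw [slitCount_zero, if_neg]; rintro ⟨rfl, rfl⟩; simp at h
  | succ n ih =>
    by_cases hp : (i, j) ∈ slitH
    · exact slitCount_succ_of_mem hp
    · rw [Int.odd_iff] at h
      push_cast at h
      rw [slitCount_sqSteps_succ n hp, ih, ih, ih, ih] <;> rw [Int.odd_iff] <;> omega

lemma slitCount_sqSteps_neg (i j : ℤ) (n : ℕ) :
    slitCount sqSteps i (-j) n = slitCount sqSteps i j n := by
  induction n generalizing i j with
  | zero => simp only [slitCount_zero, neg_eq_zero]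
  | succ n ih =>
    by_cases hp : (i, j) ∈ slitH
    · rw [slitCount_succ_of_mem hp, slitCount_succ_of_mem (by simpa [slitH] using hp)]
    · rw [slitCount_sqSteps_succ n hp, slitCount_sqSteps_succ n (by simpa [slitH] using hp),
        ← ih i (j + 1), ← ih i (j - 1), ih (i - 1), ih (i + 1), neg_add', neg_sub', sub_neg_eq_add]
      ring

end SquareLattice

open PowerSeries (X C coeff constantCoeff catalanSeries)
open LaurentPolynomial (T invert trunc)
open scoped Polynomial PowerSeries LaurentPolynomial

section Algebra

lemma powerSeries_eq_zero_of_forall_X_pow_dvd {R : Type*} [Semiring R] {f : R⟦X⟧}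
    (h : ∀ j, X ^ j ∣ f) : f = 0 := by
  ext n
  exact PowerSeries.X_pow_dvd_iff.1 (h (n + 1)) n n.lt_succ_self

variable {R : Type*} [CommRing R]

lemma symm_recurrence_invariant {p q : R} {F : ℕ → R}
    (hF : ∀ j, p * F (j + 1) = q * (F j + F (j + 2))) (j : ℕ) :
    q * (F j ^ 2 + F (j + 1) ^ 2) - p * F j * F (j + 1) =
      q * (F 0 ^ 2 + F 1 ^ 2) - p * F 0 * F 1 := by
  induction j with
  | zero => rfl
  | succ j ih => linear_combination ih + (F j - F (j + 2)) * hF j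

lemma symm_recurrence_quadratic {p q : R⟦X⟧} {F : ℕ → R⟦X⟧}
    (hF : ∀ j, p * F (j + 1) = q * (F j + F (j + 2))) (hX : ∀ j, X ^ j ∣ F j) :
    q * (F 0 ^ 2 + F 1 ^ 2) = p * F 0 * F 1 := by
  refine sub_eq_zero.1 <| powerSeries_eq_zero_of_forall_X_pow_dvd fun j => ?_
  have hj : X ^ j ∣ F (j + 1) := (pow_dvd_pow X j.le_succ).trans (hX (j + 1))
  rw [← symm_recurrence_invariant hF j]
  exact dvd_sub (((dvd_pow (hX j) two_ne_zero).add (dvd_pow hj two_ne_zero)).mul_left q)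
    (hj.mul_left _)

lemma eq_of_eq_add_X_mul_sq {a b f g : R⟦X⟧} (hf : f = a + X * b * f ^ 2)
    (hg : g = a + X * b * g ^ 2) : f = g := by
  have hu : IsUnit (1 - X * (b * (f + g))) := PowerSeries.isUnit_iff_constantCoeff.2 (by simp)
  refine sub_eq_zero.1 (hu.mul_right_eq_zero.1 ?_)
  linear_combination hf - hg

end Algebra

section Laurent

variable {R : Type*} [CommSemiring R]

lemma coeff_T_mul (k i : ℤ) (f : R[T;T⁻¹]) : (T k * f).coeff i = f.coeff (i - k) := by
  simpa using! AddMonoidAlgebra.coeff_single_mul_add f (1 : R) k (i - k)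

lemma coeff_toLaurent_natCast (p : R[X]) (k : ℕ) : (p.toLaurent).coeff (k : ℤ) = p.coeff k := by
  rw [LaurentPolynomial.coeff_toLaurent]
  exact Finsupp.mapDomain_apply Nat.cast_injective _ k

lemma coeff_toLaurent_of_neg (p : R[X]) {k : ℤ} (hk : k < 0) : p.toLaurent.coeff k = 0 := by
  rw [LaurentPolynomial.coeff_toLaurent]
  apply Finsupp.mapDomain_of_notMem_range
  rintro ⟨m, rfl⟩
  exact hk.not_ge (Int.natCast_nonneg m)

lemma toLaurent_trunc {f : R[T;T⁻¹]} (hf : ∀ k < 0, f.coeff k = 0) : (trunc f).toLaurent = f := by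
  refine LaurentPolynomial.ext fun k => ?_
  rcases lt_or_ge k 0 with hk | hk
  · rw [hf k hk, coeff_toLaurent_of_neg _ hk]
  · lift k to ℕ using hk
    rw [coeff_toLaurent_natCast]
    rfl

lemma exists_eq_C_of_toLaurent_eq_invert {p q : R[X]} (h : p.toLaurent = invert q.toLaurent) :
    ∃ r, p = Polynomial.C r ∧ q = Polynomial.C r := by
  have hpq (k : ℤ) : p.toLaurent.coeff k = q.toLaurent.coeff (-k) := by
    rw [h, LaurentPolynomial.invert_apply]
  refine ⟨p.coeff 0, Polynomial.ext fun k => ?_, Polynomial.ext fun k => ?_⟩ <;>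
    rcases eq_or_ne k 0 with rfl | hk
  · simp
  · rw [Polynomial.coeff_C_of_ne_zero hk, ← coeff_toLaurent_natCast, hpq,
      coeff_toLaurent_of_neg _ (by omega)]
  · rw [Polynomial.coeff_C_zero, ← coeff_toLaurent_natCast, ← coeff_toLaurent_natCast, hpq,
      Nat.cast_zero, neg_zero]
  · rw [Polynomial.coeff_C_of_ne_zero hk, ← coeff_toLaurent_natCast, ← neg_neg (k : ℤ), ← hpq,
      coeff_toLaurent_of_neg _ (by omega)]

/-- The embedding `f(x, t) ↦ f(x, t)` of `R[x]⟦t⟧` into `R[x, x⁻¹]⟦t⟧`. -/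
noncomputable def laurentMap : R[X]⟦X⟧ →+* R[T;T⁻¹]⟦X⟧ :=
  PowerSeries.map Polynomial.toLaurent

/-- The embedding `f(x, t) ↦ f(x⁻¹, t)` of `R[x]⟦t⟧` into `R[x, x⁻¹]⟦t⟧`. -/
noncomputable def laurentInvMap : R[X]⟦X⟧ →+* R[T;T⁻¹]⟦X⟧ :=
  PowerSeries.map ((invert (R := R) : R[T;T⁻¹] →+* R[T;T⁻¹]).comp Polynomial.toLaurent)

/-- The coefficient of `x ^ k` in a series in `R[x]⟦t⟧`. -/
noncomputable def xCoeff (k : ℕ) : R[X]⟦X⟧ →+ R⟦X⟧ where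
  toFun f := PowerSeries.mk fun n => (coeff n f).coeff k
  map_zero' := by ext; simp
  map_add' f g := by ext; simp

lemma coeff_xCoeff (k n : ℕ) (f : R[X]⟦X⟧) : coeff n (xCoeff k f) = (coeff n f).coeff k := by
  simp [xCoeff]

lemma xCoeff_zero_mul (f g : R[X]⟦X⟧) : xCoeff 0 (f * g) = xCoeff 0 f * xCoeff 0 g := by
  ext n
  simp only [coeff_xCoeff, PowerSeries.coeff_mul, Polynomial.finsetSum_coeff,
    Polynomial.mul_coeff_zero]

lemma xCoeff_one_mul (f g : R[X]⟦X⟧) :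
    xCoeff 1 (f * g) = xCoeff 0 f * xCoeff 1 g + xCoeff 1 f * xCoeff 0 g := by
  ext n
  simp only [coeff_xCoeff, PowerSeries.coeff_mul, Polynomial.finsetSum_coeff,
    Polynomial.mul_coeff_one, map_add, Finset.sum_add_distrib]

lemma xCoeff_map_C (k : ℕ) (f : R⟦X⟧) :
    xCoeff k (f.map Polynomial.C) = if k = 0 then f else 0 := by
  ext n
  rw [coeff_xCoeff, PowerSeries.coeff_map, Polynomial.coeff_C]
  split_ifs <;> simp

lemma xCoeff_one (k : ℕ) : xCoeff k (1 : R[X]⟦X⟧) = if k = 0 then 1 else 0 := by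
  simpa only [map_one] using xCoeff_map_C k (1 : R⟦X⟧)

lemma xCoeff_C_X (k : ℕ) : xCoeff k (C (Polynomial.X : R[X])) = if k = 1 then 1 else 0 := by
  ext n
  rw [coeff_xCoeff, PowerSeries.coeff_C, apply_ite (coeff n), PowerSeries.coeff_one]
  split_ifs <;> simp_all [Polynomial.coeff_X, eq_comm]

lemma coeff_coeff_laurentMap (f : R[X]⟦X⟧) (n k : ℕ) :
    (coeff n (laurentMap f)).coeff (k : ℤ) = coeff n (xCoeff k f) := by
  rw [laurentMap, PowerSeries.coeff_map, coeff_toLaurent_natCast, coeff_xCoeff]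

lemma coeff_coeff_laurentInvMap (f : R[X]⟦X⟧) (n k : ℕ) :
    (coeff n (laurentInvMap f)).coeff (-k : ℤ) = coeff n (xCoeff k f) := by
  rw [laurentInvMap, PowerSeries.coeff_map, coeff_xCoeff, ← coeff_toLaurent_natCast,
    RingHom.comp_apply]
  exact (LaurentPolynomial.invert_apply _ _).trans (by rw [neg_neg])

/-- The part of nonnegative degree in `x` of a series in `R[x, x⁻¹]⟦t⟧`, as a series in
`R[x]⟦t⟧`. -/
noncomputable def nonnegPart (f : R[T;T⁻¹]⟦X⟧) : R[X]⟦X⟧ :=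
  PowerSeries.mk fun n => trunc (coeff n f)

/-- The part of nonpositive degree in `x` of a series in `R[x, x⁻¹]⟦t⟧`, as a series in `R[x]⟦t⟧`
whose variable stands for `x⁻¹`. -/
noncomputable def nonposPart (f : R[T;T⁻¹]⟦X⟧) : R[X]⟦X⟧ :=
  PowerSeries.mk fun n => trunc (invert (coeff n f))

lemma laurentMap_nonnegPart {f : R[T;T⁻¹]⟦X⟧} (hf : ∀ n, ∀ k < 0, (coeff n f).coeff k = 0) :
    laurentMap (nonnegPart f) = f := by
  ext1 n
  rw [laurentMap, nonnegPart, PowerSeries.coeff_map, PowerSeries.coeff_mk, toLaurent_trunc (hf n)]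

lemma laurentInvMap_nonposPart {f : R[T;T⁻¹]⟦X⟧} (hf : ∀ n, ∀ k > 0, (coeff n f).coeff k = 0) :
    laurentInvMap (nonposPart f) = f := by
  ext1 n
  have h : (trunc (invert (coeff n f))).toLaurent = invert (coeff n f) :=
    toLaurent_trunc fun k hk => by
      rw [LaurentPolynomial.invert_apply, hf n (-k) (by omega)]
  rw [laurentInvMap, nonposPart, PowerSeries.coeff_map, PowerSeries.coeff_mk, RingHom.comp_apply, h]
  exact LaurentPolynomial.involutive_invert _

lemma laurentInvMap_injective : Function.Injective (laurentInvMap (R := R)) :=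
  PowerSeries.map_injective _ <|
    (invert (R := R)).injective.comp Polynomial.toLaurent_injective

lemma exists_eq_map_C_of_laurentMap_eq_laurentInvMap {f g : R[X]⟦X⟧}
    (h : laurentMap f = laurentInvMap g) :
    ∃ r : R⟦X⟧, f = r.map Polynomial.C ∧ g = r.map Polynomial.C := by
  have hn (n : ℕ) : ∃ r, coeff n f = Polynomial.C r ∧ coeff n g = Polynomial.C r :=
    exists_eq_C_of_toLaurent_eq_invert
      (by simpa only [laurentMap, laurentInvMap, PowerSeries.coeff_map] using! congrArg (coeff n) h)
  choose r hf hg using hn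
  refine ⟨PowerSeries.mk r, ?_, ?_⟩ <;> ext1 n <;> simp [hf, hg]

lemma laurentMap_map_C (f : R⟦X⟧) :
    laurentMap (f.map Polynomial.C) = f.map LaurentPolynomial.C := by
  ext1 n
  simp [laurentMap]

lemma laurentInvMap_map_C (f : R⟦X⟧) :
    laurentInvMap (f.map Polynomial.C) = f.map LaurentPolynomial.C := by
  ext1 n
  simp [laurentInvMap]

lemma laurentMap_C_X : laurentMap (C (Polynomial.X : R[X])) = C (T 1) := by
  simp [laurentMap]

lemma laurentInvMap_C_X : laurentInvMap (C (Polynomial.X : R[X])) = C (T (-1)) := by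
  simp [laurentInvMap]

end Laurent

section Catalan

/-- The Catalan series `C(t)` with integer coefficients. -/
noncomputable def intCatalan : ℤ⟦X⟧ := catalanSeries.map (Nat.castRingHom ℤ)

/-- The Catalan series `C(-t)` with integer coefficients. -/
noncomputable def intCatalanNeg : ℤ⟦X⟧ := PowerSeries.evalNegHom intCatalan

lemma intCatalan_eq : intCatalan = 1 + X * intCatalan ^ 2 := by
  have h := congrArg (PowerSeries.map (Nat.castRingHom ℤ))
    PowerSeries.catalanSeries_sq_mul_X_add_one
  simp only [map_add, map_mul, map_pow, map_one, PowerSeries.map_X] at h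
  rw [intCatalan]
  linear_combination -h

lemma intCatalanNeg_eq : intCatalanNeg = 1 - X * intCatalanNeg ^ 2 := by
  have h := congrArg PowerSeries.evalNegHom intCatalan_eq
  simp only [map_add, map_mul, map_pow, map_one, PowerSeries.evalNegHom_X] at h
  rw [intCatalanNeg]
  linear_combination h

lemma constantCoeff_intCatalan : constantCoeff intCatalan = 1 := by
  rw [intCatalan_eq]
  simp

lemma constantCoeff_intCatalanNeg : constantCoeff intCatalanNeg = 1 := by
  rw [intCatalanNeg_eq]
  simp

/-- The series `∑ 4ⁿ Cₙ t ^ (2n + 1) = t C(4t²)`. -/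
noncomputable def oddCatalan : ℤ⟦X⟧ :=
  X * PowerSeries.expand 2 two_ne_zero (PowerSeries.rescale 4 intCatalan)

lemma coeff_oddCatalan (n : ℕ) : coeff (2 * n + 1) oddCatalan = 4 ^ n * catalan n := by
  simp [oddCatalan, intCatalan, PowerSeries.coeff_succ_X_mul, PowerSeries.coeff_expand_mul]

lemma oddCatalan_eq : oddCatalan = X + 4 * X * oddCatalan ^ 2 := by
  have hX : PowerSeries.expand 2 two_ne_zero (PowerSeries.rescale (4 : ℤ) X) = 4 * X ^ 2 := by
    rw [PowerSeries.rescale_X, map_mul, PowerSeries.expand_X, PowerSeries.expand_C, map_ofNat]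
  have h := congrArg (fun f => PowerSeries.expand 2 two_ne_zero (PowerSeries.rescale (4 : ℤ) f))
    intCatalan_eq
  simp only [map_add, map_mul, map_pow, map_one, hX] at h
  rw [oddCatalan]
  linear_combination X * h

lemma four_mul_oddCatalan :
    4 * oddCatalan = intCatalan - intCatalanNeg + 2 * X * intCatalan * intCatalanNeg := by
  refine eq_of_eq_add_X_mul_sq (a := 4 * X) (b := 1) ?_ ?_
  · linear_combination 4 * oddCatalan_eq
  · linear_combination
      (1 + 4 * X * intCatalanNeg + 4 * X ^ 2 * intCatalanNeg ^ 2) * intCatalan_eq -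
        (1 - 4 * X * intCatalan + 4 * X * (intCatalan - 1)) * intCatalanNeg_eq

end Catalan

section GeneratingFunctions

/-- The Laurent polynomial `∑ᵢ a_{i,j}(n) xⁱ`. -/
noncomputable def slitPoly (n : ℕ) (j : ℤ) : ℤ[T;T⁻¹] :=
  .ofCoeff <| Finsupp.onFinset (Finset.Icc (-n) n) (fun i => (slitCount sqSteps i j n : ℤ))
    fun i hi => by
      by_contra h
      rw [Finset.mem_Icc] at h
      exact hi (mod_cast slitCount_sqSteps_eq_zero_of_lt (by omega))

lemma coeff_slitPoly (n : ℕ) (i j : ℤ) :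
    (slitPoly n j).coeff i = slitCount sqSteps i j n := rfl

lemma slitPoly_zero (j : ℤ) : slitPoly 0 j = if j = 0 then 1 else 0 := by
  refine LaurentPolynomial.ext fun i => ?_
  rw [coeff_slitPoly, slitCount_zero]
  split_ifs <;> simp_all [← LaurentPolynomial.T_zero, eq_comm]

lemma slitPoly_neg (n : ℕ) (j : ℤ) : slitPoly n (-j) = slitPoly n j :=
  LaurentPolynomial.ext fun i => congrArg Nat.cast (slitCount_sqSteps_neg i j n)

lemma slitPoly_eq_zero_of_lt {n : ℕ} {j : ℤ} (h : n < j.natAbs) : slitPoly n j = 0 :=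
  LaurentPolynomial.ext fun i =>
    congrArg Nat.cast (slitCount_sqSteps_eq_zero_of_lt (i := i) (by omega))

/-- The Laurent polynomial in `x` that counts the walks of length `n` on the slit plane followed by
one unconstrained step which ends at height `j`. -/
noncomputable def stepPoly (n : ℕ) (j : ℤ) : ℤ[T;T⁻¹] :=
  (T 1 + T (-1)) * slitPoly n j + slitPoly n (j - 1) + slitPoly n (j + 1)

lemma coeff_stepPoly (n : ℕ) (i j : ℤ) :
    (stepPoly n j).coeff i =
      ((slitCount sqSteps (i - 1) j n + slitCount sqSteps (i + 1) j n +
        slitCount sqSteps i (j - 1) n + slitCount sqSteps i (j + 1) n : ℕ) : ℤ) := by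
  simp only [stepPoly, add_mul, AddMonoidAlgebra.coeff_add, Finsupp.add_apply, coeff_T_mul,
    coeff_slitPoly, sub_neg_eq_add, Nat.cast_add]

lemma coeff_slitPoly_succ (n : ℕ) {i j : ℤ} (h : (i, j) ∉ slitH) :
    (slitPoly (n + 1) j).coeff i = (stepPoly n j).coeff i := by
  rw [coeff_stepPoly, coeff_slitPoly, slitCount_sqSteps_succ n h]

lemma slitPoly_succ (n : ℕ) {j : ℤ} (hj : j ≠ 0) : slitPoly (n + 1) j = stepPoly n j :=
  LaurentPolynomial.ext fun _ => coeff_slitPoly_succ n fun h => hj h.1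

/-- The series `∑ₙ a_{i,j}(n) tⁿ`. -/
noncomputable def slitSeries (i j : ℤ) : ℤ⟦X⟧ :=
  PowerSeries.mk fun n => (slitCount sqSteps i j n : ℤ)

lemma coeff_slitSeries (i j : ℤ) (n : ℕ) :
    coeff n (slitSeries i j) = slitCount sqSteps i j n :=
  PowerSeries.coeff_mk n _

/-- The series `S_j(x, t) = ∑ₙ ∑ᵢ a_{i,j}(n) xⁱ tⁿ`. -/
noncomputable def heightSeries (j : ℤ) : ℤ[T;T⁻¹]⟦X⟧ :=
  PowerSeries.mk fun n => slitPoly n j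

/-- The coefficient `1 - t (x + x⁻¹)` of the functional equations for `heightSeries`. -/
noncomputable def horizontalKernel : ℤ[T;T⁻¹]⟦X⟧ := 1 - X * (C (T 1) + C (T (-1)))

/-- The generating function of the square lattice walks that stay off the half-line until their
last step, which ends on it at the position marked by `x`. The walks of heights `1` and `-1` are
equinumerous, hence the factor `2`. -/
noncomputable def hitSeries : ℤ[T;T⁻¹]⟦X⟧ :=
  1 - horizontalKernel * heightSeries 0 + 2 * X * heightSeries 1

lemma coeff_heightSeries (n : ℕ) (j : ℤ) : coeff n (heightSeries j) = slitPoly n j :=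
  PowerSeries.coeff_mk n _

lemma X_pow_dvd_heightSeries (j : ℕ) : X ^ j ∣ heightSeries j :=
  PowerSeries.X_pow_dvd_iff.2 fun m hm => by
    rw [coeff_heightSeries, slitPoly_eq_zero_of_lt (by omega)]

lemma horizontalKernel_mul_heightSeries {j : ℤ} (hj : j ≠ 0) :
    horizontalKernel * heightSeries j = X * (heightSeries (j - 1) + heightSeries (j + 1)) := by
  have h : heightSeries j = X * ((C (T 1) + C (T (-1))) * heightSeries j +
      heightSeries (j - 1) + heightSeries (j + 1)) := by
    ext1 n
    cases n with
    | zero => rw [coeff_heightSeries, slitPoly_zero, if_neg hj, PowerSeries.coeff_zero_X_mul]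
    | succ n =>
      rw [PowerSeries.coeff_succ_X_mul, ← map_add C]
      simp only [map_add (coeff n), PowerSeries.coeff_C_mul, coeff_heightSeries]
      exact slitPoly_succ n hj
  rw [horizontalKernel]
  linear_combination h

lemma heightSeries_quadratic :
    X * (heightSeries 0 ^ 2 + heightSeries 1 ^ 2) =
      horizontalKernel * heightSeries 0 * heightSeries 1 := by
  refine symm_recurrence_quadratic (F := fun j => heightSeries j) (fun j => ?_)
    X_pow_dvd_heightSeries
  have h := horizontalKernel_mul_heightSeries (j := j + 1) (by omega)
  rw [add_sub_cancel_right, add_assoc] at h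
  exact_mod_cast h

lemma kernel_mul_heightSeries_sq :
    (horizontalKernel ^ 2 - 4 * X ^ 2) * heightSeries 0 ^ 2 = (1 - hitSeries) ^ 2 := by
  rw [hitSeries]
  linear_combination (-4 * X) * heightSeries_quadratic

lemma coeff_hitSeries_zero : coeff 0 hitSeries = 0 := by
  have h0 : constantCoeff (heightSeries 0) = 1 := by
    rw [← PowerSeries.coeff_zero_eq_constantCoeff_apply, coeff_heightSeries, slitPoly_zero,
      if_pos rfl]
  simp [hitSeries, horizontalKernel, h0]

lemma coeff_hitSeries_succ (n : ℕ) :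
    coeff (n + 1) hitSeries = stepPoly n 0 - slitPoly (n + 1) 0 := by
  have h : hitSeries =
      1 + X * (C (T 1 + T (-1)) * heightSeries 0 + heightSeries 1 + heightSeries 1) -
        heightSeries 0 := by
    rw [hitSeries, horizontalKernel, map_add]
    ring
  rw [h, map_sub, map_add, PowerSeries.coeff_succ_X_mul, map_add, map_add, PowerSeries.coeff_C_mul]
  simp [stepPoly, coeff_heightSeries, PowerSeries.coeff_one, slitPoly_neg]

lemma coeff_coeff_hitSeries_of_pos (n : ℕ) {i : ℤ} (hi : 0 < i) :
    (coeff n hitSeries).coeff i = 0 := by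
  cases n with
  | zero => rw [coeff_hitSeries_zero]; rfl
  | succ n =>
    rw [coeff_hitSeries_succ, AddMonoidAlgebra.coeff_sub, Finsupp.sub_apply,
      coeff_slitPoly_succ n fun h => h.2.not_gt hi, sub_self]

lemma coeff_coeff_heightSeries_zero_of_neg (n : ℕ) {i : ℤ} (hi : i < 0) :
    (coeff n (heightSeries 0)).coeff i = 0 := by
  rw [coeff_heightSeries, coeff_slitPoly]
  cases n with
  | zero => rw [slitCount_zero, if_neg (by omega), Nat.cast_zero]
  | succ n => rw [slitCount_succ_of_mem ⟨rfl, hi.le⟩, Nat.cast_zero]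

lemma slitSeries_zero_zero : slitSeries 0 0 = 1 := by
  ext n
  rw [coeff_slitSeries, PowerSeries.coeff_one]
  cases n with
  | zero => simp [slitCount_zero]
  | succ n => simp [slitCount_succ_of_mem (show ((0 : ℤ), (0 : ℤ)) ∈ slitH from ⟨rfl, le_rfl⟩)]

/-- The series `S_0`, which is a series in `ℤ[x]⟦t⟧`. -/
noncomputable def axisSeries : ℤ[X]⟦X⟧ := nonnegPart (heightSeries 0)

/-- The series `hitSeries` written in the variable `x⁻¹`, in which it is a series in
`ℤ[x⁻¹]⟦t⟧`. -/
noncomputable def hitSeriesInv : ℤ[X]⟦X⟧ := nonposPart hitSeries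

lemma laurentMap_axisSeries : laurentMap axisSeries = heightSeries 0 :=
  laurentMap_nonnegPart fun n _ => coeff_coeff_heightSeries_zero_of_neg n

lemma laurentInvMap_hitSeriesInv : laurentInvMap hitSeriesInv = hitSeries :=
  laurentInvMap_nonposPart fun n _ => coeff_coeff_hitSeries_of_pos n

lemma xCoeff_axisSeries (k : ℕ) : xCoeff k axisSeries = slitSeries k 0 := by
  ext n
  rw [← coeff_coeff_laurentMap, laurentMap_axisSeries, coeff_heightSeries, coeff_slitPoly,
    coeff_slitSeries]

lemma xCoeff_zero_axisSeries : xCoeff 0 axisSeries = 1 := by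
  rw [xCoeff_axisSeries, Nat.cast_zero, slitSeries_zero_zero]

lemma xCoeff_zero_hitSeriesInv :
    xCoeff 0 hitSeriesInv = X * (slitSeries 1 0 + 2 * slitSeries 0 1) := by
  ext n
  rw [← coeff_coeff_laurentInvMap, laurentInvMap_hitSeriesInv, Nat.cast_zero, neg_zero, two_mul]
  cases n with
  | zero => simp [coeff_hitSeries_zero]
  | succ n =>
    have h0 : slitCount sqSteps 0 0 (n + 1) = 0 := slitCount_succ_of_mem ⟨rfl, le_rfl⟩
    have hneg : (slitCount sqSteps (-1) 0 n : ℤ) = 0 := by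
      simpa only [coeff_heightSeries, coeff_slitPoly] using
        coeff_coeff_heightSeries_zero_of_neg n neg_one_lt_zero
    have hsymm : slitCount sqSteps 0 (-1) n = slitCount sqSteps 0 1 n := slitCount_sqSteps_neg 0 1 n
    rw [coeff_hitSeries_succ, AddMonoidAlgebra.coeff_sub, Finsupp.sub_apply, coeff_stepPoly,
      coeff_slitPoly, h0, PowerSeries.coeff_succ_X_mul, zero_sub, zero_add, hsymm]
    simp only [map_add, coeff_slitSeries, Nat.cast_add, hneg]
    ring

end GeneratingFunctions

section Factorization

lemma kernel_factorization {R : Type*} [CommRing R] {c d t z w : R} (hc : c = 1 + t * c ^ 2)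
    (hd : d = 1 - t * d ^ 2) (hzw : z * w = 1) :
    ((1 - t * (z + w)) ^ 2 - 4 * t ^ 2) * (c * d) ^ 2 =
      (1 - (c - 1) * z) * (1 - (1 - d) * z) * ((1 - (c - 1) * w) * (1 - (1 - d) * w)) := by
  have h₁ : (1 - t * (z + w) - 2 * t) * c ^ 2 = (1 - (c - 1) * z) * (1 - (c - 1) * w) := by
    linear_combination (z + w + 2) * hc - (c - 1) ^ 2 * hzw
  have h₂ : (1 - t * (z + w) + 2 * t) * d ^ 2 = (1 - (1 - d) * z) * (1 - (1 - d) * w) := by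
    linear_combination -(z + w - 2) * hd - (1 - d) ^ 2 * hzw
  linear_combination (1 - t * (z + w) + 2 * t) * d ^ 2 * h₁ +
    (1 - (c - 1) * z) * (1 - (c - 1) * w) * h₂

/-- The factor `P(x)` in the canonical factorization
`((1 - t (x + x⁻¹))² - 4 t²) (C(t) C(-t))² = P(x) P(x⁻¹)`. -/
noncomputable def kernelFactor : ℤ[X]⟦X⟧ :=
  (1 - (intCatalan - 1).map Polynomial.C * C Polynomial.X) *
    (1 - (1 - intCatalanNeg).map Polynomial.C * C Polynomial.X)

/-- The factor `C(t) C(-t)` that normalizes the canonical factorization. -/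
noncomputable def kernelScale : ℤ[X]⟦X⟧ := (intCatalan * intCatalanNeg).map Polynomial.C

lemma kernel_mul_kernelScale_sq :
    (horizontalKernel ^ 2 - 4 * X ^ 2) * laurentInvMap kernelScale ^ 2 =
      laurentMap kernelFactor * laurentInvMap kernelFactor := by
  have hc := congrArg (PowerSeries.map (LaurentPolynomial.C (R := ℤ))) intCatalan_eq
  have hd := congrArg (PowerSeries.map (LaurentPolynomial.C (R := ℤ))) intCatalanNeg_eq
  have hT : (C (T 1) * C (T (-1)) : ℤ[T;T⁻¹]⟦X⟧) = 1 := by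
    rw [← map_mul, ← LaurentPolynomial.T_add, add_neg_cancel, LaurentPolynomial.T_zero, map_one]
  simp only [map_add, map_sub, map_mul, map_pow, map_one, PowerSeries.map_X] at hc hd
  simp only [kernelFactor, kernelScale, map_mul, map_sub, map_one, laurentMap_map_C,
    laurentInvMap_map_C, laurentMap_C_X, laurentInvMap_C_X]
  exact kernel_factorization hc hd hT

lemma isUnit_kernelFactor : IsUnit kernelFactor := by
  have hmap (f : ℤ⟦X⟧) : constantCoeff (f.map Polynomial.C) = Polynomial.C (constantCoeff f) := by
    simp only [← PowerSeries.coeff_zero_eq_constantCoeff_apply, PowerSeries.coeff_map]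
  rw [PowerSeries.isUnit_iff_constantCoeff]
  simp [kernelFactor, hmap, constantCoeff_intCatalan, constantCoeff_intCatalanNeg]

lemma xCoeff_zero_kernelFactor : xCoeff 0 kernelFactor = 1 := by
  simp [kernelFactor, xCoeff_zero_mul, xCoeff_one, xCoeff_C_X]

lemma xCoeff_one_kernelFactor : xCoeff 1 kernelFactor = intCatalanNeg - intCatalan := by
  simp [kernelFactor, xCoeff_zero_mul, xCoeff_one_mul, xCoeff_one, xCoeff_C_X, xCoeff_map_C]

-- The kernel equation equates a series in `x` with a series in `x⁻¹`, so neither depends on `x`.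
lemma axisSeries_sq_mul_kernelFactor : axisSeries ^ 2 * kernelFactor = 1 := by
  obtain ⟨q, hq⟩ := isUnit_kernelFactor.exists_right_inv
  have hsep : laurentMap (axisSeries ^ 2 * kernelFactor) =
      laurentInvMap ((kernelScale * (1 - hitSeriesInv)) ^ 2 * q) := by
    have hinv := congrArg laurentInvMap hq
    simp only [map_mul, map_pow, map_sub, map_one, laurentMap_axisSeries,
      laurentInvMap_hitSeriesInv] at hinv ⊢
    linear_combination
      laurentInvMap kernelScale ^ 2 * laurentInvMap q * kernel_mul_heightSeries_sq -
        heightSeries 0 ^ 2 * laurentInvMap q * kernel_mul_kernelScale_sq -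
        heightSeries 0 ^ 2 * laurentMap kernelFactor * hinv
  obtain ⟨r, hr, -⟩ := exists_eq_map_C_of_laurentMap_eq_laurentInvMap hsep
  have hr1 : r = 1 := by
    simpa [sq, xCoeff_map_C, xCoeff_zero_mul, xCoeff_zero_axisSeries, xCoeff_zero_kernelFactor]
      using (congrArg (xCoeff 0) hr).symm
  rw [hr, hr1, map_one]

lemma kernelScale_mul_one_sub_hitSeriesInv_sq :
    (kernelScale * (1 - hitSeriesInv)) ^ 2 = kernelFactor := by
  apply laurentInvMap_injective
  have haxis := congrArg laurentMap axisSeries_sq_mul_kernelFactor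
  simp only [map_mul, map_pow, map_sub, map_one, laurentMap_axisSeries,
    laurentInvMap_hitSeriesInv] at haxis ⊢
  linear_combination
    heightSeries 0 ^ 2 * kernel_mul_kernelScale_sq -
      laurentInvMap kernelScale ^ 2 * kernel_mul_heightSeries_sq +
      laurentInvMap kernelFactor * haxis

lemma two_mul_slitSeries_one_zero : 2 * slitSeries 1 0 = intCatalan - intCatalanNeg := by
  have h := congrArg (xCoeff 1) axisSeries_sq_mul_kernelFactor
  rw [sq, xCoeff_one_mul, xCoeff_one_mul, xCoeff_zero_mul, xCoeff_one, if_neg one_ne_zero,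
    xCoeff_zero_axisSeries, xCoeff_axisSeries, Nat.cast_one, xCoeff_zero_kernelFactor,
    xCoeff_one_kernelFactor] at h
  linear_combination h

lemma catalan_mul_one_sub_hits :
    intCatalan * intCatalanNeg * (1 - X * (slitSeries 1 0 + 2 * slitSeries 0 1)) = 1 := by
  have h := congrArg (xCoeff 0) kernelScale_mul_one_sub_hitSeriesInv_sq
  simp only [kernelScale, sq, xCoeff_zero_mul, map_sub, xCoeff_map_C, xCoeff_one, if_true,
    xCoeff_zero_hitSeriesInv, xCoeff_zero_kernelFactor] at h
  refine (mul_self_eq_one_iff.1 h).resolve_right fun hneg => ?_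
  have h0 := congrArg constantCoeff hneg
  simp [constantCoeff_intCatalan, constantCoeff_intCatalanNeg] at h0

lemma slitSeries_zero_one : slitSeries 0 1 = oddCatalan := by
  have hc : intCatalan * (1 - X * intCatalan) = 1 := by linear_combination intCatalan_eq
  have hd : intCatalanNeg * (1 + X * intCatalanNeg) = 1 := by linear_combination intCatalanNeg_eq
  have hinv : 1 - X * (slitSeries 1 0 + 2 * slitSeries 0 1) =
      (1 - X * intCatalan) * (1 + X * intCatalanNeg) := by
    linear_combination
      (1 - X * intCatalan) * (1 + X * intCatalanNeg) * catalan_mul_one_sub_hits -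
        (1 - X * (slitSeries 1 0 + 2 * slitSeries 0 1)) *
          (intCatalanNeg * (1 + X * intCatalanNeg) * hc + hd)
  have hsum : slitSeries 1 0 + 2 * slitSeries 0 1 =
      intCatalan - intCatalanNeg + X * intCatalan * intCatalanNeg :=
    mul_left_cancel₀ PowerSeries.X_ne_zero (by linear_combination -hinv)
  have h4 : (4 : ℤ⟦X⟧) ≠ 0 := fun h =>
    four_ne_zero (α := ℤ) (by simpa only [map_ofNat, map_zero] using congrArg constantCoeff h)
  refine mul_left_cancel₀ h4 ?_
  linear_combination 2 * hsum - two_mul_slitSeries_one_zero - four_mul_oddCatalan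

end Factorization

/-- `a_{0,1}(2n+1) = 4ⁿ·Cₙ` and `a_{0,1}(2n) = 0`. -/
theorem slit_count_0_1 (n : ℕ) :
    slitCount sqSteps 0 1 (2 * n + 1) = 4 ^ n * catalan n
    ∧ slitCount sqSteps 0 1 (2 * n) = 0 := by
  constructor
  · have h := coeff_oddCatalan n
    rw [← slitSeries_zero_one, coeff_slitSeries] at h
    exact_mod_cast h
  · exact slitCount_sqSteps_eq_zero_of_odd ⟨n, by push_cast; ring⟩
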